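/- If (A,B) is stabilizable, then the algebraic Riccati equation PA + AᵀP - PBBᵀP + I = 0 admits a symmetric positive definite solution P. -/

import Mathlib

open Matrix

open Filter Topology in
theorem tendsto_pow_zero_of_spectrum_norm_lt_one {𝔸 : Type*} [NormedRing 𝔸] [NormedAlgebra ℂ 𝔸]
    [CompleteSpace 𝔸] (a : 𝔸) (ha : ∀ z ∈ spectrum ℂ a, ‖z‖ < 1) :
    Tendsto (fun k : ℕ => a ^ k) atTop (𝓝 0) := by
  rcases subsingleton_or_nontrivial 𝔸 with h | h
  · simpa only [Subsingleton.elim _ (0 : 𝔸)] using tendsto_const_nhds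
  have hρ : spectralRadius ℂ a < (1 : NNReal) :=
    spectrum.spectralRadius_lt_of_forall_lt a fun z hz => by exact_mod_cast ha z hz
  obtain ⟨r, hr, hr1⟩ := ENNReal.lt_iff_exists_nnreal_btwn.1 hρ
  have hr1 : r < 1 := by exact_mod_cast hr1
  have hev := (spectrum.pow_nnnorm_pow_one_div_tendsto_nhds_spectralRadius a).eventually_lt_const hr
  refine squeeze_zero_norm' ?_ (tendsto_pow_atTop_nhds_zero_of_lt_one r.2 hr1)
  filter_upwards [hev, eventually_gt_atTop 0] with k hk hk0
  have h1 : ((‖a ^ k‖₊ : ENNReal) ^ (1 / k : ℝ)) ^ (k : ℝ) ≤ (r : ENNReal) ^ (k : ℝ) :=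
    ENNReal.rpow_le_rpow hk.le (by positivity)
  rw [← ENNReal.rpow_mul, one_div_mul_cancel (by positivity), ENNReal.rpow_one,
    ENNReal.rpow_natCast] at h1
  exact_mod_cast h1

/-- A real square matrix is Hurwitz if all its complex eigenvalues have negative real part. -/
def Matrix.IsHurwitz {n : ℕ} (M : Matrix (Fin n) (Fin n) ℝ) : Prop :=
  ∀ z ∈ spectrum ℂ (M.map (algebraMap ℝ ℂ)), z.re < 0

namespace Matrix

variable {n : ℕ} {M P Q : Matrix (Fin n) (Fin n) ℝ}

theorem PosSemidef.transpose_eq (hP : P.PosSemidef) : Pᵀ = P := by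
  simpa only [IsHermitian, conjTranspose_eq_transpose_of_trivial] using hP.isHermitian

open Filter Topology in
theorem tendsto_pow_zero_of_spectrum_map_norm_lt_one (C : Matrix (Fin n) (Fin n) ℝ)
    (hC : ∀ z ∈ spectrum ℂ (C.map (algebraMap ℝ ℂ)), ‖z‖ < 1) :
    Tendsto (fun k : ℕ => C ^ k) atTop (𝓝 0) := by
  have h : Tendsto (fun k : ℕ => C.map (algebraMap ℝ ℂ) ^ k) atTop (𝓝 0) := by
    let _ : NormedRing (Matrix (Fin n) (Fin n) ℂ) := Matrix.linftyOpNormedRing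
    let _ : NormedAlgebra ℂ (Matrix (Fin n) (Fin n) ℂ) := Matrix.linftyOpNormedAlgebra
    exact tendsto_pow_zero_of_spectrum_norm_lt_one _ hC
  have hre : Continuous fun N : Matrix (Fin n) (Fin n) ℂ => N.map Complex.re :=
    continuous_id.matrix_map Complex.continuous_re
  have h2 := (hre.tendsto 0).comp h
  have h0 : (0 : Matrix (Fin n) (Fin n) ℂ).map Complex.re = 0 := by ext; simp
  rw [h0] at h2
  refine h2.congr fun k => ?_
  rw [Function.comp_apply, ← Matrix.map_pow]
  ext i j
  simp

open Filter Topology in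
/-- The Cayley transform of a Hurwitz matrix has powers converging to zero. -/
theorem IsHurwitz.exists_cayley (hM : M.IsHurwitz) :
    ∃ R, (1 - M) * R = 1 ∧ Tendsto (fun k : ℕ => ((1 + M) * R) ^ k) atTop (𝓝 0) := by
  have hmap : ∀ N : Matrix (Fin n) (Fin n) ℝ,
      N.map (algebraMap ℝ ℂ) = (algebraMap ℝ ℂ).mapMatrix N := fun _ => rfl
  have hunit : IsUnit (1 - M).det := by
    have h1 : (1 : ℂ) ∉ spectrum ℂ (M.map (algebraMap ℝ ℂ)) := fun h => by
      have := hM 1 h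
      norm_num at this
    rw [spectrum.notMem_iff, map_one, hmap, ← map_one (algebraMap ℝ ℂ).mapMatrix, ← map_sub,
      Matrix.isUnit_iff_isUnit_det, ← RingHom.map_det] at h1
    simpa using h1
  refine ⟨(1 - M)⁻¹, Matrix.mul_nonsing_inv _ hunit,
    tendsto_pow_zero_of_spectrum_map_norm_lt_one _ fun z hz => ?_⟩
  set M' := M.map (algebraMap ℝ ℂ) with hM'
  have hinv : ((1 + M) * (1 - M)⁻¹).map (algebraMap ℝ ℂ) * (1 - M') = 1 + M' := by
    rw [hM', hmap, hmap, ← map_one (algebraMap ℝ ℂ).mapMatrix, ← map_sub, ← map_mul, mul_assoc,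
      Matrix.nonsing_inv_mul _ hunit, mul_one, map_add]
  have hU : IsUnit (1 - M') := by
    have : IsUnit (1 - M) := (Matrix.isUnit_iff_isUnit_det _).2 hunit
    have := this.map (algebraMap ℝ ℂ).mapMatrix
    rwa [map_sub, map_one] at this
  have hprod : (algebraMap ℂ (Matrix (Fin n) (Fin n) ℂ) z
      - ((1 + M) * (1 - M)⁻¹).map (algebraMap ℝ ℂ)) * (1 - M') =
      algebraMap ℂ _ (z - 1) - (z + 1) • M' := by
    rw [sub_mul, hinv, Algebra.algebraMap_eq_smul_one, Algebra.algebraMap_eq_smul_one,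
      smul_mul_assoc, one_mul]
    module
  have hnot : ¬ IsUnit (algebraMap ℂ (Matrix (Fin n) (Fin n) ℂ) (z - 1) - (z + 1) • M') := by
    rw [← hprod, hU.mul_right_iff]
    exact spectrum.mem_iff.1 hz
  have hz1 : z + 1 ≠ 0 := by
    intro h
    apply hnot
    rw [h, zero_smul, sub_zero]
    refine (IsUnit.mk0 _ ?_).map _
    intro h'
    have : (2 : ℂ) = 0 := by linear_combination h - h'
    norm_num at this
  have hmem : (z - 1) / (z + 1) ∈ spectrum ℂ M' := by
    rw [spectrum.mem_iff]
    intro h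
    apply hnot
    have := ((IsUnit.mk0 _ hz1).map (algebraMap ℂ (Matrix (Fin n) (Fin n) ℂ))).mul h
    rwa [mul_sub, ← map_mul, mul_div_cancel₀ _ hz1, ← Algebra.smul_def] at this
  have hneg := hM _ hmem
  have hpos : 0 < Complex.normSq (z + 1) := Complex.normSq_pos.2 hz1
  rw [Complex.div_re, ← add_div, div_neg_iff] at hneg
  have hneg : (z - 1).re * (z + 1).re + (z - 1).im * (z + 1).im < 0 := by
    rcases hneg with h | h
    · exact absurd h.2 hpos.le.not_gt
    · exact h.1
  simp only [Complex.sub_re, Complex.add_re, Complex.one_re, Complex.sub_im, Complex.add_im,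
    Complex.one_im] at hneg
  rw [← sq_lt_one_iff₀ (norm_nonneg z), Complex.sq_norm, Complex.normSq_apply]
  linarith

theorem stein_of_lyapunov {R : Matrix (Fin n) (Fin n) ℝ} (hR : (1 - M) * R = 1)
    (h : Mᵀ * P + P * M + Q = 0) :
    P = ((1 + M) * R)ᵀ * P * ((1 + M) * R) + (2 : ℝ) • (Rᵀ * Q * R) := by
  have h1 : (1 - M)ᵀ * P * (1 - M) = (1 + M)ᵀ * P * (1 + M) + (2 : ℝ) • Q := by
    rw [two_smul]
    simp only [transpose_sub, transpose_add, transpose_one]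
    linear_combination (norm := noncomm_ring) (-2 : ℤ) • h
  calc P = ((1 - M) * R)ᵀ * P * ((1 - M) * R) := by simp [hR]
    _ = Rᵀ * ((1 - M)ᵀ * P * (1 - M)) * R := by simp only [transpose_mul, mul_assoc]
    _ = _ := by
      rw [h1, mul_add, add_mul, mul_smul_comm, smul_mul_assoc, transpose_mul]
      simp only [mul_assoc]

open Filter Topology in
theorem posSemidef_of_stein {C : Matrix (Fin n) (Fin n) ℝ}
    (hC : Tendsto (fun k : ℕ => C ^ k) atTop (𝓝 0)) (hP : P.IsSymm) (hQ : Q.PosSemidef)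
    (h : P = Cᵀ * P * C + Q) : P.PosSemidef := by
  have hk : ∀ k : ℕ, (P - (C ^ k)ᵀ * P * C ^ k).PosSemidef := by
    intro k
    induction k with
    | zero => simpa using PosSemidef.zero
    | succ k ih =>
      have := hQ.add (ih.conjTranspose_mul_mul_same C)
      rw [conjTranspose_eq_transpose_of_trivial] at this
      convert this using 1
      rw [pow_succ, transpose_mul]
      nth_rw 1 [h]
      noncomm_ring
  refine .of_dotProduct_mulVec_nonneg (by rwa [IsHermitian, conjTranspose_eq_transpose_of_trivial]) fun x => ?_
  have hlim : Tendsto (fun k : ℕ => star x ⬝ᵥ (P - (C ^ k)ᵀ * P * C ^ k) *ᵥ x) atTop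
      (𝓝 (star x ⬝ᵥ (P - (0 : Matrix (Fin n) (Fin n) ℝ)ᵀ * P * 0) *ᵥ x)) := by
    have hc : Continuous fun N : Matrix (Fin n) (Fin n) ℝ =>
        star x ⬝ᵥ (P - Nᵀ * P * N) *ᵥ x := by fun_prop
    exact (hc.tendsto 0).comp hC
  rw [mul_zero, sub_zero] at hlim
  exact ge_of_tendsto' hlim fun k => (hk k).dotProduct_mulVec_nonneg x

open Filter Topology in
theorem IsHurwitz.eq_zero_of_lyapunov (hM : M.IsHurwitz) (h : Mᵀ * P + P * M = 0) : P = 0 := by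
  obtain ⟨R, hR, hC⟩ := hM.exists_cayley
  have hs := stein_of_lyapunov (Q := 0) hR (by rw [h, add_zero])
  rw [mul_zero, zero_mul, smul_zero, add_zero] at hs
  set C := (1 + M) * R
  have hk : ∀ k : ℕ, (C ^ k)ᵀ * P * C ^ k = P := by
    intro k
    induction k with
    | zero => simp
    | succ k ih =>
      calc (C ^ (k + 1))ᵀ * P * C ^ (k + 1) = Cᵀ * ((C ^ k)ᵀ * P * C ^ k) * C := by
            rw [pow_succ, transpose_mul]
            simp only [mul_assoc]
        _ = P := by rw [ih, ← hs]
  have hc : Continuous fun N : Matrix (Fin n) (Fin n) ℝ => Nᵀ * P * N := by fun_prop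
  have hlim := ((hc.tendsto 0).comp hC).congr hk
  rw [mul_zero] at hlim
  exact tendsto_nhds_unique tendsto_const_nhds hlim

theorem IsHurwitz.posSemidef_of_lyapunov (hM : M.IsHurwitz) (hP : P.IsSymm) (hQ : Q.PosSemidef)
    (h : Mᵀ * P + P * M + Q = 0) : P.PosSemidef := by
  obtain ⟨R, hR, hC⟩ := hM.exists_cayley
  refine posSemidef_of_stein hC hP ?_ (stein_of_lyapunov hR h)
  have := hQ.conjTranspose_mul_mul_same R
  rw [conjTranspose_eq_transpose_of_trivial] at this
  exact this.smul zero_le_two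

/-- The Lyapunov equation of a Hurwitz matrix has a positive semidefinite solution. -/
theorem IsHurwitz.exists_lyapunov (hM : M.IsHurwitz) (hQ : Q.PosSemidef) :
    ∃ P : Matrix (Fin n) (Fin n) ℝ, P.PosSemidef ∧ Mᵀ * P + P * M + Q = 0 := by
  let L : Matrix (Fin n) (Fin n) ℝ →ₗ[ℝ] Matrix (Fin n) (Fin n) ℝ :=
    LinearMap.mulLeft ℝ Mᵀ + LinearMap.mulRight ℝ M
  have hinj : Function.Injective L :=
    (injective_iff_map_eq_zero L).2 fun P hP => hM.eq_zero_of_lyapunov hP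
  obtain ⟨P, hP⟩ := LinearMap.surjective_of_injective hinj (-Q)
  have hP : Mᵀ * P + P * M = -Q := hP
  have hQs : Qᵀ = Q := hQ.transpose_eq
  have hPt : Pᵀ * M + Mᵀ * Pᵀ = -Q := by
    have := congrArg transpose hP
    rwa [transpose_add, transpose_mul, transpose_mul, transpose_transpose, transpose_neg, hQs]
      at this
  have hsymm : Pᵀ - P = 0 := hM.eq_zero_of_lyapunov <| by
    linear_combination (norm := noncomm_ring) hPt - hP
  have h : Mᵀ * P + P * M + Q = 0 := by rw [hP, neg_add_cancel]
  exact ⟨P, hM.posSemidef_of_lyapunov (sub_eq_zero.1 hsymm) hQ h, h⟩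

/-- Lyapunov's criterion for a real matrix to be Hurwitz. -/
theorem isHurwitz_of_lyapunov (hP : P.PosSemidef) (hQ : Q.PosDef)
    (h : Mᵀ * P + P * M + Q = 0) : M.IsHurwitz := by
  intro z hz
  obtain ⟨v, hv0, hv⟩ : ∃ v ≠ 0, M.map (algebraMap ℝ ℂ) *ᵥ v = z • v := by
    rw [spectrum.mem_iff, isUnit_iff_isUnit_det, isUnit_iff_ne_zero, not_not,
      ← exists_mulVec_eq_zero_iff] at hz
    obtain ⟨v, hv0, hv⟩ := hz
    refine ⟨v, hv0, ?_⟩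
    rw [sub_mulVec, Algebra.algebraMap_eq_smul_one, smul_mulVec, one_mulVec, sub_eq_zero] at hv
    exact hv.symm
  let x : Fin n → ℝ := fun i => (v i).re
  let y : Fin n → ℝ := fun i => (v i).im
  have hx : M *ᵥ x = z.re • x - z.im • y := by
    ext i
    simpa [mulVec, dotProduct] using congrArg Complex.re (congrFun hv i)
  have hy : M *ᵥ y = z.re • y + z.im • x := by
    ext i
    simpa [mulVec, dotProduct] using congrArg Complex.im (congrFun hv i)
  have hsymm : Pᵀ = P := hP.transpose_eq
  have hcomm : ∀ u w : Fin n → ℝ, u ⬝ᵥ P *ᵥ w = w ⬝ᵥ P *ᵥ u := fun u w => by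
    rw [dotProduct_mulVec, ← mulVec_transpose, hsymm, dotProduct_comm]
  have hquad : ∀ u : Fin n → ℝ, 2 * (u ⬝ᵥ P *ᵥ (M *ᵥ u)) + u ⬝ᵥ Q *ᵥ u = 0 := fun u => by
    have h0 : u ⬝ᵥ (Mᵀ * P + P * M + Q) *ᵥ u = 0 := by rw [h, zero_mulVec, dotProduct_zero]
    rw [add_mulVec, add_mulVec, dotProduct_add, dotProduct_add, ← mulVec_mulVec, ← mulVec_mulVec,
      dotProduct_mulVec u Mᵀ, vecMul_transpose, hcomm (M *ᵥ u) u] at h0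
    linarith
  have hqx := hquad x
  have hqy := hquad y
  rw [hx, mulVec_sub, mulVec_smul, mulVec_smul, dotProduct_sub, dotProduct_smul, dotProduct_smul,
    smul_eq_mul, smul_eq_mul] at hqx
  rw [hy, mulVec_add, mulVec_smul, mulVec_smul, dotProduct_add, dotProduct_smul, dotProduct_smul,
    smul_eq_mul, smul_eq_mul, hcomm y x] at hqy
  have hPx : 0 ≤ x ⬝ᵥ P *ᵥ x := hP.dotProduct_mulVec_nonneg x
  have hPy : 0 ≤ y ⬝ᵥ P *ᵥ y := hP.dotProduct_mulVec_nonneg y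
  have hQx : 0 ≤ x ⬝ᵥ Q *ᵥ x := hQ.posSemidef.dotProduct_mulVec_nonneg x
  have hQy : 0 ≤ y ⬝ᵥ Q *ᵥ y := hQ.posSemidef.dotProduct_mulVec_nonneg y
  have hQpos : 0 < x ⬝ᵥ Q *ᵥ x + y ⬝ᵥ Q *ᵥ y := by
    by_cases hx0 : x = 0
    · have hy0 : y ≠ 0 := fun hy0 => hv0 <| by
        ext i
        exact Complex.ext (congrFun hx0 i) (congrFun hy0 i)
      exact add_pos_of_nonneg_of_pos hQx (hQ.dotProduct_mulVec_pos hy0)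
    · exact add_pos_of_pos_of_nonneg (hQ.dotProduct_mulVec_pos hx0) hQy
  by_contra! hre
  have := mul_nonneg hre (add_nonneg hPx hPy)
  linarith

open Filter Topology in
theorem exists_tendsto_of_posSemidef_antitone {P : ℕ → Matrix (Fin n) (Fin n) ℝ}
    (hP : ∀ k, (P k).PosSemidef) (hanti : ∀ k, (P k - P (k + 1)).PosSemidef) :
    ∃ L, Tendsto P atTop (𝓝 L) := by
  have hq : ∀ x : Fin n → ℝ, ∃ l, Tendsto (fun k => x ⬝ᵥ P k *ᵥ x) atTop (𝓝 l) := fun x => by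
    refine ⟨_, tendsto_atTop_ciInf (antitone_nat_of_succ_le fun k => ?_) ⟨0, ?_⟩⟩
    · have : 0 ≤ x ⬝ᵥ (P k - P (k + 1)) *ᵥ x := (hanti k).dotProduct_mulVec_nonneg x
      rwa [sub_mulVec, dotProduct_sub, sub_nonneg] at this
    · rintro _ ⟨k, rfl⟩
      exact (hP k).dotProduct_mulVec_nonneg x
  choose l hl using hq
  let e : Fin n → Fin n → ℝ := fun i => Pi.single i 1
  refine ⟨of fun i j => (l (e i + e j) - l (e i) - l (e j)) / 2,
    tendsto_pi_nhds.2 fun i => tendsto_pi_nhds.2 fun j => ?_⟩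
  refine ((((hl (e i + e j)).sub (hl (e i))).sub (hl (e j))).div_const 2).congr fun k => ?_
  have hsymm : P k j i = P k i j := by simpa using (hP k).isHermitian.apply i j
  simp only [e, mulVec_add, dotProduct_add, add_dotProduct, mulVec_single_one,
    single_one_dotProduct, col_apply, hsymm]
  ring

end Matrix

section Riccati

variable {n p : ℕ} (A : Matrix (Fin n) (Fin n) ℝ) (B : Matrix (Fin n) (Fin p) ℝ)

/-- The left-hand side of the algebraic Riccati equation. -/
def riccati (P : Matrix (Fin n) (Fin n) ℝ) : Matrix (Fin n) (Fin n) ℝ :=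
  P * A + Aᵀ * P - P * B * Bᵀ * P + 1

variable {A B}

/-- Newton's iteration (in Kleinman's form) for the algebraic Riccati equation. -/
theorem exists_newton_riccati {P : Matrix (Fin n) (Fin n) ℝ} (hP : P.PosSemidef)
    (hric : (-riccati A B P).PosSemidef) :
    ∃ P' : Matrix (Fin n) (Fin n) ℝ, (P'.PosSemidef ∧ (-riccati A B P').PosSemidef) ∧
      (P - P').PosSemidef ∧
      (A - B * Bᵀ * P)ᵀ * P' + P' * (A - B * Bᵀ * P) + (1 + P * B * Bᵀ * P) = 0 := by
  have hsq : ∀ {X : Matrix (Fin n) (Fin n) ℝ}, Xᵀ = X → (X * B * Bᵀ * X).PosSemidef := by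
    intro X hX
    have := posSemidef_conjTranspose_mul_self (Bᵀ * X)
    rw [conjTranspose_eq_transpose_of_trivial, transpose_mul, transpose_transpose, hX] at this
    simpa only [Matrix.mul_assoc] using this
  have hMt : (A - B * Bᵀ * P)ᵀ = Aᵀ - P * B * Bᵀ := by
    simp only [transpose_sub, transpose_mul, transpose_transpose, hP.transpose_eq, Matrix.mul_assoc]
  simp only [hMt]
  have hPeq : (Aᵀ - P * B * Bᵀ) * P + P * (A - B * Bᵀ * P)
      + (1 + (P * B * Bᵀ * P + -riccati A B P)) = 0 := by
    simp only [riccati, Matrix.sub_mul, Matrix.mul_sub, Matrix.mul_assoc]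
    abel
  have hM : (A - B * Bᵀ * P).IsHurwitz := by
    rw [← hMt] at hPeq
    exact isHurwitz_of_lyapunov hP (PosDef.one.add_posSemidef ((hsq (hP.transpose_eq)).add hric)) hPeq
  obtain ⟨P', hP', h⟩ := hM.exists_lyapunov (PosSemidef.one.add (hsq (hP.transpose_eq)))
  have hD : (P - P')ᵀ = P - P' := by rw [transpose_sub, hP.transpose_eq, hP'.transpose_eq]
  rw [hMt] at h
  refine ⟨P', ⟨hP', ?_⟩, ?_, h⟩
  · convert hsq hD using 1
    rw [neg_eq_iff_add_eq_zero, ← h]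
    simp only [riccati, Matrix.sub_mul, Matrix.mul_sub, Matrix.mul_assoc]
    abel
  · refine hM.posSemidef_of_lyapunov hD hric ?_
    rw [hMt, ← sub_zero (0 : Matrix (Fin n) (Fin n) ℝ)]
    nth_rw 1 [← hPeq]
    rw [← h]
    simp only [Matrix.sub_mul, Matrix.mul_sub, Matrix.mul_assoc]
    abel

theorem exists_posSemidef_neg_riccati {F : Matrix (Fin p) (Fin n) ℝ}
    (hF : (A + B * F).IsHurwitz) :
    ∃ P : Matrix (Fin n) (Fin n) ℝ, P.PosSemidef ∧ (-riccati A B P).PosSemidef := by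
  have hFF := posSemidef_conjTranspose_mul_self F
  rw [conjTranspose_eq_transpose_of_trivial] at hFF
  obtain ⟨P, hP, h⟩ := hF.exists_lyapunov (PosSemidef.one.add hFF)
  refine ⟨P, hP, ?_⟩
  have hPs : Pᵀ = P := hP.transpose_eq
  have hsq := posSemidef_conjTranspose_mul_self (F + Bᵀ * P)
  rw [conjTranspose_eq_transpose_of_trivial] at hsq
  convert hsq using 1
  rw [neg_eq_iff_add_eq_zero, ← h]
  simp only [riccati, transpose_add, transpose_mul, transpose_transpose, hPs, Matrix.add_mul,
    Matrix.mul_add, Matrix.mul_assoc]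
  abel

open Filter Topology in
theorem exists_posSemidef_riccati_eq_zero {P₀ : Matrix (Fin n) (Fin n) ℝ} (hP₀ : P₀.PosSemidef)
    (hric : (-riccati A B P₀).PosSemidef) :
    ∃ P : Matrix (Fin n) (Fin n) ℝ, P.PosSemidef ∧ riccati A B P = 0 := by
  let S := {P : Matrix (Fin n) (Fin n) ℝ // P.PosSemidef ∧ (-riccati A B P).PosSemidef}
  choose f hfS hfanti hfeq using fun P : S => exists_newton_riccati P.2.1 P.2.2
  let P : ℕ → S := fun k => (fun X => ⟨f X, hfS X⟩)^[k] ⟨P₀, hP₀, hric⟩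
  have hsucc : ∀ k, (P (k + 1) : Matrix (Fin n) (Fin n) ℝ) = f (P k) := fun k => by
    simp only [P, Function.iterate_succ_apply']
  obtain ⟨L, hL⟩ := exists_tendsto_of_posSemidef_antitone (P := fun k => (P k).1)
    (fun k => (P k).2.1) (fun k => by simpa only [hsucc] using hfanti (P k))
  have hsymm : Lᵀ = L := by
    have hc : Continuous fun N : Matrix (Fin n) (Fin n) ℝ => Nᵀ := by fun_prop
    refine tendsto_nhds_unique (((hc.tendsto L).comp hL).congr fun k => ?_) hL
    exact (P k).2.1.transpose_eq
  refine ⟨L, .of_dotProduct_mulVec_nonneg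
    (by rwa [IsHermitian, conjTranspose_eq_transpose_of_trivial]) fun x => ?_, ?_⟩
  · have hc : Continuous fun N : Matrix (Fin n) (Fin n) ℝ => star x ⬝ᵥ N *ᵥ x := by fun_prop
    exact ge_of_tendsto' ((hc.tendsto L).comp hL) fun k => (P k).2.1.dotProduct_mulVec_nonneg x
  · have hc : Continuous fun N : Matrix (Fin n) (Fin n) ℝ × Matrix (Fin n) (Fin n) ℝ =>
        (A - B * Bᵀ * N.1)ᵀ * N.2 + N.2 * (A - B * Bᵀ * N.1) + (1 + N.1 * B * Bᵀ * N.1) := by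
      fun_prop
    have hlim := (hc.tendsto (L, L)).comp (hL.prodMk_nhds (hL.comp (tendsto_add_atTop_nat 1)))
    have h0 := tendsto_nhds_unique
      (hlim.congr fun k => (by simpa [hsucc] using hfeq (P k))) tendsto_const_nhds
    rw [← h0]
    simp only [riccati, transpose_sub, transpose_mul, transpose_transpose, hsymm, Matrix.sub_mul,
      Matrix.mul_sub, Matrix.mul_assoc]
    abel

theorem posDef_of_riccati_eq_zero {P : Matrix (Fin n) (Fin n) ℝ} (hP : P.PosSemidef)
    (h : riccati A B P = 0) : P.PosDef := by
  refine .of_dotProduct_mulVec_pos hP.isHermitian fun x hx => ?_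
  refine lt_of_le_of_ne (hP.dotProduct_mulVec_nonneg x) fun h0 => hx ?_
  have hPx : P *ᵥ x = 0 := (hP.dotProduct_mulVec_zero_iff x).1 h0.symm
  have hPs : Pᵀ = P := hP.transpose_eq
  have hxP : x ᵥ* P = 0 := by rw [← mulVec_transpose, hPs, hPx]
  have hq : x ⬝ᵥ riccati A B P *ᵥ x = 0 := by rw [h, zero_mulVec, dotProduct_zero]
  simp only [riccati, add_mulVec, sub_mulVec, ← mulVec_mulVec, hPx, mulVec_zero, add_zero,
    sub_zero, one_mulVec, dotProduct_add, dotProduct_mulVec x P, hxP, zero_dotProduct,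
    zero_add, dotProduct_self_eq_zero] at hq
  exact hq

end Riccati

/-- If `(A,B)` is stabilizable, then the ARE `PA + AᵀP - PBBᵀP + I = 0` admits a symmetric
positive definite solution `P`. -/
theorem are_solution_exists {n p : ℕ}
    (A : Matrix (Fin n) (Fin n) ℝ) (B : Matrix (Fin n) (Fin p) ℝ)
    (hstab : ∃ F : Matrix (Fin p) (Fin n) ℝ,
      ∀ z ∈ spectrum ℂ ((A + B * F).map (algebraMap ℝ ℂ)), z.re < 0) :
    ∃ P : Matrix (Fin n) (Fin n) ℝ, P.PosDef ∧ P.IsSymm ∧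
      P * A + A.transpose * P - P * B * B.transpose * P + 1 = 0 := by
  obtain ⟨F, hF⟩ := hstab
  obtain ⟨P₀, hP₀, hric⟩ := exists_posSemidef_neg_riccati hF
  obtain ⟨P, hP, h⟩ := exists_posSemidef_riccati_eq_zero hP₀ hric
  exact ⟨P, posDef_of_riccati_eq_zero hP h, hP.transpose_eq, h⟩
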